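/- A ≠ H and B ≠ H hold if and only if the set {x ∈ Δ* : η(x) ∉ H} is strongly generic in Δ*; that is, A ≠ H and B ≠ H if and only if there exists ε > 0 such that for almost all n, the number of words x ∈ Δ^n with η(x) ∈ H is at most 2^{−εn}·|Δ|^n. -/

import Mathlib

open scoped ENNReal

/-- The alphabet `Δ = Σ ⊔ {b, b⁻¹}`: `Sum.inl s` for a letter `s ∈ Σ`, and
`Sum.inr true = b`, `Sum.inr false = b⁻¹`. -/
abbrev HNNAlph {H : Type*} (S : Finset H) := {x // x ∈ S} ⊕ Bool

/-- Evaluation of a single letter of `Δ` in the HNN extension. -/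
def hnnLetter {H : Type*} [Group H] {A B : Subgroup H} (φ : A ≃* B) {S : Finset H} :
    HNNAlph S → HNNExtension H A B φ
  | Sum.inl s => HNNExtension.of s.val
  | Sum.inr true => HNNExtension.t
  | Sum.inr false => HNNExtension.t⁻¹

/-- The evaluation homomorphism `η : Δ* → G` (on words, as lists of letters). -/
def hnnEval {H : Type*} [Group H] {A B : Subgroup H} (φ : A ≃* B) {S : Finset H}
    (w : List (HNNAlph S)) : HNNExtension H A B φ :=
  (w.map (hnnLetter φ)).prod

/-- The image of the base group `H` inside the HNN extension. -/
def hnnBase {H : Type*} [Group H] {A B : Subgroup H} (φ : A ≃* B) :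
    Subgroup (HNNExtension H A B φ) :=
  MonoidHom.range HNNExtension.of

/-!
If `A` and `B` are proper, let `Δ` act on the normal forms of `G`.  Give a normal form with `k`
stable letters the weight `r ^ k`, with `r < 1`, multiplied by a bonus `c > 1` if one of `b`, `b⁻¹`
cancels against its first stable letter.  A cancellable form is turned into a non-cancellable one by
some letter of `Σ`, because `Σ` generates `H` and is therefore contained neither in `A` nor in `B`.
For suitable `c` and `r` the sum over all letters thus multiplies the weight by at most some
`K < |Δ|`, and since the elements of `H` have weight `1`, at most `K ^ n` words of length `n`
evaluate into `H`.

If `A = H`, then `b * H * b⁻¹ ⊆ H`, so every word of exponent sum `0` all of whose prefixes have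
nonnegative exponent sum evaluates into `H`.  Each word of exponent sum `0` has such a word among
its rotations, so the words evaluating into `H` make up at least an inverse polynomial fraction of
`Δⁿ` for even `n`.  The case `B = H` follows by exchanging `b` and `b⁻¹`.
-/

open HNNExtension HNNExtension.NormalWord Filter

section WordCount

variable {α : Type*}

/-- The number of words of length `n` in the language `L`; words are functions on `Fin n`. -/
noncomputable def wordCount (L : Set (List α)) (n : ℕ) : ℕ :=
  Nat.card {w : Fin n → α // List.ofFn w ∈ L}

/-- A language is strongly negligible if its density among the words of length `n` is eventually
at most `2 ^ (-ε n)` for some `ε > 0`, that is, if its complement is strongly generic. -/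
def IsStronglyNegligible [Fintype α] (L : Set (List α)) : Prop :=
  ∃ ε > (0 : ℝ), ∀ᶠ n : ℕ in atTop,
    (wordCount L n : ℝ) ≤ (2 : ℝ) ^ (-(ε * n)) * (Fintype.card α : ℝ) ^ n

theorem IsStronglyNegligible.of_wordCount_le_pow [Fintype α] {L : Set (List α)} {K : ℝ}
    (hK : 0 < K) (hKα : K < Fintype.card α) (h : ∀ n, (wordCount L n : ℝ) ≤ K ^ n) :
    IsStronglyNegligible L := by
  have hα : (0 : ℝ) < Fintype.card α := hK.trans hKα
  refine ⟨Real.logb 2 (Fintype.card α / K), Real.logb_pos one_lt_two ((one_lt_div hK).2 hKα),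
    Eventually.of_forall fun n => (h n).trans_eq ?_⟩
  have hlog : (2 : ℝ) ^ (-Real.logb 2 (Fintype.card α / K)) = K / Fintype.card α := by
    rw [Real.rpow_neg zero_le_two, Real.rpow_logb two_pos (by norm_num) (by positivity), inv_div]
  rw [← neg_mul, Real.rpow_mul zero_le_two, hlog, Real.rpow_natCast, ← mul_pow,
    div_mul_cancel₀ _ hα.ne']

theorem eventually_add_one_pow_mul_pow_lt_one (d : ℕ) {q : ℝ} (hq₀ : 0 < q) (hq₁ : q < 1) :
    ∀ᶠ n : ℕ in atTop, ((n : ℝ) + 1) ^ d * q ^ n < 1 := by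
  have hlim := (tendsto_add_atTop_iff_nat 1).2
    (tendsto_pow_const_mul_const_pow_of_abs_lt_one d (by rwa [abs_of_pos hq₀]))
  filter_upwards [hlim.eventually_lt_const hq₀] with n hn
  rw [pow_succ q, ← mul_assoc] at hn
  exact_mod_cast (mul_lt_iff_lt_one_left hq₀).1 hn

theorem not_isStronglyNegligible_of_frequently_pow_le [Fintype α] [Nonempty α] {L : Set (List α)}
    (d : ℕ) (h : ∃ᶠ n in atTop, Fintype.card α ^ n ≤ (n + 1) ^ d * wordCount L n) :
    ¬ IsStronglyNegligible L := by
  rintro ⟨ε, hε, hL⟩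
  have hq₁ : (2 : ℝ) ^ (-ε) < 1 := Real.rpow_lt_one_of_one_lt_of_neg one_lt_two (neg_lt_zero.2 hε)
  obtain ⟨n, hlow, hup, hlt⟩ := (h.and_eventually (hL.and
    (eventually_add_one_pow_mul_pow_lt_one d (by positivity) hq₁))).exists
  rw [← neg_mul, Real.rpow_mul zero_le_two, Real.rpow_natCast] at hup
  have hN : (0 : ℝ) < (Fintype.card α : ℝ) ^ n := by positivity
  have hlow' : (Fintype.card α : ℝ) ^ n ≤ (n + 1) ^ d * wordCount L n := by exact_mod_cast hlow
  refine lt_irrefl ((Fintype.card α : ℝ) ^ n) ?_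
  calc (Fintype.card α : ℝ) ^ n
      ≤ (n + 1) ^ d * (((2 : ℝ) ^ (-ε)) ^ n * (Fintype.card α : ℝ) ^ n) := by
        refine hlow'.trans ?_
        gcongr
    _ = ((n + 1) ^ d * ((2 : ℝ) ^ (-ε)) ^ n) * (Fintype.card α : ℝ) ^ n := by ring
    _ < (Fintype.card α : ℝ) ^ n := mul_lt_of_lt_one_left hN hlt

theorem wordCount_eq_ncard (L : Set (List α)) (n : ℕ) :
    wordCount L n = {l ∈ L | l.length = n}.ncard :=
  Nat.card_congr
    { toFun := fun w => ⟨List.ofFn w.1, w.2, List.length_ofFn⟩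
      invFun := fun l => ⟨fun i => l.1.get (i.cast l.2.2.symm), by
        obtain ⟨l, hl, rfl⟩ := l
        simpa using hl⟩
      left_inv := fun w => by ext i; simp
      right_inv := fun l => by
        obtain ⟨l, hl, rfl⟩ := l
        simp }

theorem finite_sep_length_eq [Finite α] (L : Set (List α)) (n : ℕ) :
    {l ∈ L | l.length = n}.Finite :=
  (List.finite_length_eq α n).subset fun _ hl => hl.2

theorem wordCount_mul_wordCount_le [Finite α] {L₁ L₂ L : Set (List α)}
    (h : ∀ l₁ ∈ L₁, ∀ l₂ ∈ L₂, l₁ ++ l₂ ∈ L) (m n : ℕ) :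
    wordCount L₁ m * wordCount L₂ n ≤ wordCount L (m + n) := by
  simp only [wordCount_eq_ncard, ← Set.ncard_prod]
  refine Set.ncard_le_ncard_of_injOn (fun p => p.1 ++ p.2) ?_ ?_ (finite_sep_length_eq L _)
  · rintro ⟨l₁, l₂⟩ ⟨h₁, h₂⟩
    exact ⟨h l₁ h₁.1 l₂ h₂.1, by simp [h₁.2, h₂.2]⟩
  · rintro ⟨l₁, l₂⟩ ⟨h₁, -⟩ ⟨l₁', l₂'⟩ ⟨h₁', -⟩ heq
    obtain ⟨rfl, rfl⟩ := List.append_inj heq (h₁.2.trans h₁'.2.symm)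
    rfl

theorem wordCount_le_wordCount_of_map [Finite α] {L L' : Set (List α)} {e : α → α}
    (he : e.Injective) (h : ∀ l ∈ L, l.map e ∈ L') (n : ℕ) : wordCount L n ≤ wordCount L' n := by
  simp only [wordCount_eq_ncard]
  exact Set.ncard_le_ncard_of_injOn (List.map e) (fun l hl => ⟨h l hl.1, by simp [hl.2]⟩)
    (List.map_injective_iff.2 he).injOn (finite_sep_length_eq L' n)

theorem wordCount_le_mul_wordCount_of_rotate [Finite α] {L L' : Set (List α)}
    (h : ∀ l ∈ L, ∃ i ≤ l.length, l.rotate i ∈ L') (n : ℕ) :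
    wordCount L n ≤ (n + 1) * wordCount L' n := by
  choose! i hi hL' using h
  simp only [wordCount_eq_ncard]
  rw [← Finset.card_range (n + 1), ← Set.ncard_coe_finset, ← Set.ncard_prod]
  refine Set.ncard_le_ncard_of_injOn (fun l => (i l, l.rotate (i l))) ?_ ?_
    ((Finset.finite_toSet _).prod (finite_sep_length_eq L' n))
  · rintro l ⟨hl, rfl⟩
    exact ⟨by simpa using Nat.lt_succ_of_le (hi l hl), hL' l hl, List.length_rotate _ _⟩
  · intro l _ l' _ heq
    obtain ⟨hi', hrot⟩ := Prod.mk.inj heq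
    exact List.rotate_injective _ (hi' ▸ hrot)

end WordCount

section Superharmonic

variable {α M X R : Type*} [Fintype α] [Monoid M] [MulAction M X]
  [CommSemiring R] [PartialOrder R] [IsOrderedRing R] {ev : α → M} {f : X → R} {K : R}

theorem sum_prod_ofFn_smul_le (hK : 0 ≤ K) (h : ∀ x, ∑ a, f (ev a • x) ≤ K * f x) (x : X) (n : ℕ) :
    ∑ w : Fin n → α, f (((List.ofFn w).map ev).prod • x) ≤ K ^ n * f x := by
  induction n with
  | zero => simp
  | succ n ih =>
    calc ∑ w : Fin (n + 1) → α, f (((List.ofFn w).map ev).prod • x)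
        = ∑ w : Fin n → α, ∑ a, f (ev a • ((List.ofFn w).map ev).prod • x) := by
          rw [← (Fin.consEquiv fun _ => α).sum_comp, Fintype.sum_prod_type, Finset.sum_comm]
          simp [Fin.consEquiv, List.ofFn_succ, mul_smul]
      _ ≤ ∑ w : Fin n → α, K * f (((List.ofFn w).map ev).prod • x) :=
          Finset.sum_le_sum fun w _ => h _
      _ ≤ K ^ (n + 1) * f x := by
          rw [← Finset.mul_sum, pow_succ', mul_assoc]
          gcongr

theorem wordCount_le_pow_mul (hf : ∀ x, 0 ≤ f x) (hK : 0 ≤ K)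
    (h : ∀ x, ∑ a, f (ev a • x) ≤ K * f x) {L : Set (List α)} {x : X}
    (hL : ∀ l ∈ L, 1 ≤ f ((l.map ev).prod • x)) (n : ℕ) :
    (wordCount L n : R) ≤ K ^ n * f x := by
  classical
  refine le_trans ?_ (sum_prod_ofFn_smul_le hK h x n)
  rw [wordCount, Nat.card_eq_fintype_card, Fintype.card_subtype, Finset.card_filter]
  push_cast
  refine Finset.sum_le_sum fun w _ => ?_
  split_ifs with hw
  exacts [hL _ hw, hf _]

end Superharmonic

section BalancedWords

variable {α : Type*} {f : α → ℤ}

theorem abs_sum_map_ofFn_le (hf : ∀ a, |f a| ≤ 1) {n : ℕ} (w : Fin n → α) :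
    |((List.ofFn w).map f).sum| ≤ n := by
  rw [List.map_ofFn, List.sum_ofFn]
  calc |∑ i, (f ∘ w) i| ≤ ∑ i, |(f ∘ w) i| := Finset.abs_sum_le_sum_abs _ _
    _ ≤ ∑ _i : Fin n, 1 := Finset.sum_le_sum fun i _ => hf (w i)
    _ = n := by simp

variable [Fintype α]

theorem exists_card_pow_le_mul_wordCount_sum_eq (hf : ∀ a, |f a| ≤ 1) (n : ℕ) :
    ∃ k : ℤ, Fintype.card α ^ n ≤ (2 * n + 1) * wordCount {l | (l.map f).sum = k} n := by
  classical
  have hcount (k : ℤ) : wordCount {l : List α | (l.map f).sum = k} n =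
      (Finset.univ.filter fun w : Fin n → α => ((List.ofFn w).map f).sum = k).card := by
    rw [wordCount, Nat.card_eq_fintype_card, Fintype.card_subtype]
    rfl
  have hIcc : (Finset.Icc (-n : ℤ) n).card = 2 * n + 1 := by
    rw [Int.card_Icc]
    lia
  have hsum : Fintype.card α ^ n =
      ∑ k ∈ Finset.Icc (-n : ℤ) n, wordCount {l : List α | (l.map f).sum = k} n := by
    simp only [hcount]
    rw [← Finset.card_eq_sum_card_fiberwise fun w _ => by
      simpa [abs_le] using abs_sum_map_ofFn_le hf w]
    simp
  obtain ⟨k, -, hk⟩ := Finset.exists_le_of_sum_le (s := Finset.Icc (-n : ℤ) n)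
    (f := fun _ => Fintype.card α ^ n)
    (g := fun k => (2 * n + 1) * wordCount {l : List α | (l.map f).sum = k} n) ⟨0, by simp⟩
    (by rw [← Finset.mul_sum, ← hsum, Finset.sum_const, hIcc, smul_eq_mul])
  exact ⟨k, hk⟩

theorem card_pow_le_mul_wordCount_sum_eq_zero (hf : ∀ a, |f a| ≤ 1) {e : α → α}
    (he : e.Injective) (hfe : ∀ a, f (e a) = -f a) (n : ℕ) :
    Fintype.card α ^ (n + n) ≤
      (2 * n + 1) ^ 2 * wordCount {l : List α | (l.map f).sum = 0} (n + n) := by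
  obtain ⟨k, hk⟩ := exists_card_pow_le_mul_wordCount_sum_eq hf n
  have hneg (l : List α) : ((l.map e).map f).sum = -(l.map f).sum := by
    rw [List.map_map, List.sum_neg, List.map_map]
    exact congrArg List.sum (List.map_congr_left fun a _ => hfe a)
  have hreflect := wordCount_le_wordCount_of_map (L := {l : List α | (l.map f).sum = k})
    (L' := {l | (l.map f).sum = -k}) he (fun l hl => (hneg l).trans (congrArg Neg.neg hl)) n
  have happend := wordCount_mul_wordCount_le (L₁ := {l : List α | (l.map f).sum = k})
    (L₂ := {l | (l.map f).sum = -k}) (L := {l | (l.map f).sum = 0})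
    (fun l₁ h₁ l₂ h₂ => by
      rw [Set.mem_ofPred_eq] at h₁ h₂ ⊢
      rw [List.map_append, List.sum_append, h₁, h₂, add_neg_cancel]) n n
  set N := wordCount {l : List α | (l.map f).sum = k} n
  calc Fintype.card α ^ (n + n) = Fintype.card α ^ n * Fintype.card α ^ n := pow_add _ _ _
    _ ≤ ((2 * n + 1) * N) * ((2 * n + 1) * N) := Nat.mul_le_mul hk hk
    _ = (2 * n + 1) ^ 2 * (N * N) := by ring
    _ ≤ _ := Nat.mul_le_mul_left _ ((Nat.mul_le_mul_left _ hreflect).trans happend)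

end BalancedWords

section Rotation

theorem exists_rotate_sum_take_nonneg {M : Type*} [AddCommGroup M] [LinearOrder M]
    [IsOrderedAddMonoid M] (l : List M) (hl : l.sum = 0) :
    ∃ i ≤ l.length, ∀ j, 0 ≤ ((l.rotate i).take j).sum := by
  obtain ⟨i, hi, hmin⟩ := Finset.exists_min_image (Finset.range (l.length + 1))
    (fun i => (l.take i).sum) ⟨0, by simp⟩
  have hi : i ≤ l.length := Nat.lt_succ_iff.1 (Finset.mem_range.1 hi)
  have hmin (j : ℕ) (hj : j ≤ l.length) : (l.take i).sum ≤ (l.take j).sum :=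
    hmin j (Finset.mem_range.2 (Nat.lt_succ_of_le hj))
  have hsplit : (l.take i).sum + (l.drop i).sum = 0 := by
    rw [← List.sum_append, List.take_append_drop, hl]
  refine ⟨i, hi, fun j => ?_⟩
  rw [List.rotate_eq_drop_append_take hi, List.take_append, List.sum_append, List.take_take,
    List.length_drop]
  rcases le_total j (l.length - i) with hj | hj
  · have hprefix : (l.take (i + j)).sum = (l.take i).sum + ((l.drop i).take j).sum := by
      rw [List.take_add, List.sum_append]
    have := hmin (i + j) (by lia)
    rw [hprefix] at this
    simpa [Nat.sub_eq_zero_of_le hj] using this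
  · rw [List.take_of_length_le (by simpa using hj), eq_neg_of_add_eq_zero_right hsplit,
      neg_add_eq_sub, sub_nonneg]
    exact hmin _ (by lia)

variable {α G : Type*} [Group G] {P : Subgroup G} {τ : G} {ev : α → G} {ht : α → ℤ}

theorem conj_zpow_mem (hτ : ∀ g ∈ P, τ * g * τ⁻¹ ∈ P) {g : G} (hg : g ∈ P) {k : ℤ} (hk : 0 ≤ k) :
    τ ^ k * g * (τ ^ k)⁻¹ ∈ P := by
  lift k to ℕ using hk
  rw [zpow_natCast]
  induction k with
  | zero => simpa using hg
  | succ k ih => simpa [pow_succ', mul_assoc] using hτ _ ih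

theorem zpow_mul_prod_map_mul_zpow_mem (hτ : ∀ g ∈ P, τ * g * τ⁻¹ ∈ P)
    (hev : ∀ a, ev a * τ ^ (-ht a) ∈ P) (l : List α) {k : ℤ}
    (hk : ∀ j, 0 ≤ k + ((l.map ht).take j).sum) :
    τ ^ k * (l.map ev).prod * τ ^ (-(k + (l.map ht).sum)) ∈ P := by
  induction l generalizing k with
  | nil => simp
  | cons a l ih =>
    have htail := ih (k := k + ht a) fun j => by simpa [add_assoc] using hk (j + 1)
    have hhead := conj_zpow_mem hτ (hev a) (by simpa using hk 0)
    have hsplit : τ ^ k * ((a :: l).map ev).prod * τ ^ (-(k + ((a :: l).map ht).sum)) =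
        (τ ^ k * (ev a * τ ^ (-ht a)) * (τ ^ k)⁻¹) *
          (τ ^ (k + ht a) * (l.map ev).prod * τ ^ (-(k + ht a + (l.map ht).sum))) := by
      simp only [List.map_cons, List.prod_cons, List.sum_cons, add_assoc]
      group
    rw [hsplit]
    exact mul_mem hhead htail

theorem exists_rotate_prod_map_mem (hτ : ∀ g ∈ P, τ * g * τ⁻¹ ∈ P)
    (hev : ∀ a, ev a * τ ^ (-ht a) ∈ P) (l : List α) (hl : (l.map ht).sum = 0) :
    ∃ i ≤ l.length, ((l.rotate i).map ev).prod ∈ P := by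
  obtain ⟨i, hi, hnonneg⟩ := exists_rotate_sum_take_nonneg (l.map ht) hl
  have hsum : ((l.rotate i).map ht).sum = 0 :=
    ((List.rotate_perm l i).map ht).sum_eq.trans hl
  refine ⟨i, by simpa using hi, ?_⟩
  have hmem := zpow_mul_prod_map_mul_zpow_mem hτ hev (l.rotate i) (k := 0) fun j => by
    simpa [List.map_rotate] using hnonneg j
  rwa [hsum, add_zero, neg_zero, zpow_zero, one_mul, mul_one] at hmem

end Rotation

theorem exists_mem_notMem_of_closure_eq_top {G : Type*} [Group G] {s : Set G}
    (hs : Subgroup.closure s = ⊤) {K : Subgroup G} (hK : K ≠ ⊤) : ∃ x ∈ s, x ∉ K :=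
  Set.not_subset.1 fun h => hK (top_le_iff.1 (hs ▸ (Subgroup.closure_le K).2 h))

section NormalWordWeight

variable {H : Type*} [Group H] {A B : Subgroup H} (φ : A ≃* B) {d : TransversalPair H A B}
  {S : Finset H} {u v : ℤˣ} {g : H} {w : NormalWord d} {c r : ℝ}

theorem length_unitsSMul_add_one_of_cancels (h : Cancels u w) :
    (unitsSMul φ u w).toList.length + 1 = w.toList.length := by
  simp only [unitsSMul, h, dite_true]
  cases w using consRecOn with
  | ofGroup => simp [Cancels] at h
  | cons => simp [unitsSMulWithCancel]

theorem length_unitsSMul_of_not_cancels (h : ¬ Cancels u w) :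
    (unitsSMul φ u w).toList.length = w.toList.length + 1 := by
  simp [unitsSMul, h]

theorem cancels_smul_iff_of_cancels (h : Cancels u w) :
    Cancels v (g • w) ↔ v = u ∧ g ∈ toSubgroup A B u := by
  have hlast : (g • w).toList.head?.map Prod.fst = some (-v) ↔ v = u := by
    rw [group_smul_toList, h.2, Option.some_inj, neg_inj, eq_comm]
  rw [Cancels, hlast, and_comm]
  refine and_congr_right ?_
  rintro rfl
  exact Subgroup.mul_mem_cancel_right _ h.1

theorem not_cancels_neg_of_cancels (h : Cancels u w) : ¬ Cancels (-u) w := fun h' =>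
  units_ne_neg_self u ((cancels_smul_iff_of_cancels (g := 1) h).1 (by rwa [one_smul])).1.symm

open Classical in
/-- The Lyapunov function on normal forms: a factor `r` for each stable letter, and a bonus factor
`c` if one of `t`, `t⁻¹` cancels against the first stable letter. -/
noncomputable def cancelWeight (c r : ℝ) (w : NormalWord d) : ℝ :=
  (if ∃ u, Cancels u w then c else 1) * r ^ w.toList.length

theorem cancelWeight_of_cancels (h : Cancels u w) :
    cancelWeight c r w = c * r ^ w.toList.length := by
  rw [cancelWeight, if_pos ⟨u, h⟩]

theorem cancelWeight_of_forall_not_cancels (h : ∀ u, ¬ Cancels u w) :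
    cancelWeight c r w = r ^ w.toList.length := by
  rw [cancelWeight, if_neg (not_exists.2 h), one_mul]

theorem cancelWeight_ofGroup (g : H) : cancelWeight c r (ofGroup g : NormalWord d) = 1 := by
  simp [cancelWeight, Cancels]

theorem cancelWeight_nonneg (hc : 0 ≤ c) (hr : 0 ≤ r) (w : NormalWord d) :
    0 ≤ cancelWeight c r w := by
  unfold cancelWeight
  split_ifs <;> positivity

theorem cancelWeight_le (hc : 1 ≤ c) (hr : 0 ≤ r) (w : NormalWord d) :
    cancelWeight c r w ≤ c * r ^ w.toList.length := by
  unfold cancelWeight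
  gcongr
  split_ifs
  exacts [le_rfl, hc]

theorem cancelWeight_unitsSMul_le_of_cancels (hc : 1 ≤ c) (hr : 0 < r) (h : Cancels u w) :
    cancelWeight c r (unitsSMul φ u w) ≤ c * r⁻¹ * r ^ w.toList.length := by
  refine (cancelWeight_le hc hr.le _).trans_eq ?_
  rw [← length_unitsSMul_add_one_of_cancels φ h, pow_succ', mul_assoc,
    inv_mul_cancel_left₀ hr.ne']

theorem cancelWeight_unitsSMul_le_of_not_cancels (hc : 1 ≤ c) (hr : 0 ≤ r) (h : ¬ Cancels u w) :
    cancelWeight c r (unitsSMul φ u w) ≤ c * r * r ^ w.toList.length := by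
  refine (cancelWeight_le hc hr _).trans_eq ?_
  rw [length_unitsSMul_of_not_cancels φ h, pow_succ', mul_assoc]

theorem sum_cancelWeight_smul_le (hc : 1 ≤ c) (hr : 0 ≤ r) (S : Finset H) (w : NormalWord d) :
    ∑ s ∈ S, cancelWeight c r (s • w) ≤ S.card * (c * r ^ w.toList.length) := by
  rw [← nsmul_eq_mul]
  exact Finset.sum_le_card_nsmul _ _ _ fun s _ => cancelWeight_le hc hr (s • w)

theorem sum_cancelWeight_smul_le_of_cancels (hc : 1 ≤ c) (hr : 0 ≤ r) (h : Cancels u w)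
    (hgS : g ∈ S) (hgu : g ∉ toSubgroup A B u) :
    ∑ s ∈ S, cancelWeight c r (s • w) ≤ ((S.card - 1) * c + 1) * r ^ w.toList.length := by
  classical
  have hg : cancelWeight c r (g • w) = r ^ w.toList.length :=
    cancelWeight_of_forall_not_cancels fun v hv =>
      hgu ((cancels_smul_iff_of_cancels h).1 hv).2
  have hrest := sum_cancelWeight_smul_le hc hr (S.erase g) w
  rw [Finset.card_erase_of_mem hgS, Nat.cast_pred (Finset.card_pos.2 ⟨g, hgS⟩)] at hrest
  rw [← Finset.add_sum_erase _ _ hgS, hg]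
  linarith

theorem sum_hnnLetter_smul (f : NormalWord d → ℝ) (w : NormalWord d) (u : ℤˣ) :
    ∑ x : HNNAlph S, f (hnnLetter φ x • w) =
      ∑ s ∈ S, f (s • w) + (f (unitsSMul φ u w) + f (unitsSMul φ (-u) w)) := by
  have ht : ((t : HNNExtension H A B φ) • w) = unitsSMul φ 1 w := t_smul_eq_unitsSMul φ w
  have ht' : ((t⁻¹ : HNNExtension H A B φ) • w) = unitsSMul φ (-1) w := by
    rw [← t_pow_smul_eq_unitsSMul]
    simp
  simp only [Fintype.sum_sum_type, Fintype.sum_bool, hnnLetter, ht, ht', of_smul_eq_smul,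
    Finset.sum_coe_sort S fun s => f (s • w)]
  rcases Int.units_eq_one_or u with rfl | rfl
  · rfl
  · rw [neg_neg, add_comm (f (unitsSMul φ 1 w))]

theorem sum_cancelWeight_hnnLetter_smul_le_of_cancels (hc : 1 ≤ c) (hr : 0 < r) (h : Cancels u w)
    (hgS : g ∈ S) (hgu : g ∉ toSubgroup A B u) :
    ∑ x : HNNAlph S, cancelWeight c r (hnnLetter φ x • w) ≤
      ((S.card - 1) + c⁻¹ + (r + r⁻¹)) * cancelWeight c r w := by
  have hc₀ : c ≠ 0 := by positivity
  rw [sum_hnnLetter_smul φ _ w u, cancelWeight_of_cancels h]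
  calc _ ≤ ((S.card - 1) * c + 1) * r ^ w.toList.length +
        (c * r⁻¹ * r ^ w.toList.length + c * r * r ^ w.toList.length) :=
        add_le_add (sum_cancelWeight_smul_le_of_cancels hc hr.le h hgS hgu)
          (add_le_add (cancelWeight_unitsSMul_le_of_cancels φ hc hr h)
            (cancelWeight_unitsSMul_le_of_not_cancels φ hc hr.le (not_cancels_neg_of_cancels h)))
    _ = _ := by field_simp; ring

theorem sum_cancelWeight_hnnLetter_smul_le_of_not_cancels (hc : 1 ≤ c) (hr : 0 ≤ r)
    (h : ∀ u, ¬ Cancels u w) :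
    ∑ x : HNNAlph S, cancelWeight c r (hnnLetter φ x • w) ≤
      c * (S.card + 2 * r) * cancelWeight c r w := by
  rw [sum_hnnLetter_smul φ _ w 1, cancelWeight_of_forall_not_cancels h]
  calc _ ≤ S.card * (c * r ^ w.toList.length) +
        (c * r * r ^ w.toList.length + c * r * r ^ w.toList.length) :=
        add_le_add (sum_cancelWeight_smul_le hc hr S w)
          (add_le_add (cancelWeight_unitsSMul_le_of_not_cancels φ hc hr (h 1))
            (cancelWeight_unitsSMul_le_of_not_cancels φ hc hr (h (-1))))
    _ = _ := by ring

theorem sum_cancelWeight_hnnLetter_smul_le (hc : 1 ≤ c) (hr : 0 < r)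
    (hS : ∀ u, ∃ s ∈ S, s ∉ toSubgroup A B u) (w : NormalWord d) :
    ∑ x : HNNAlph S, cancelWeight c r (hnnLetter φ x • w) ≤
      max (c * (S.card + 2 * r)) ((S.card - 1) + c⁻¹ + (r + r⁻¹)) * cancelWeight c r w := by
  have hw := cancelWeight_nonneg (zero_le_one.trans hc) hr.le w
  by_cases h : ∃ u, Cancels u w
  · obtain ⟨u, hu⟩ := h
    obtain ⟨s, hsS, hsu⟩ := hS u
    exact (sum_cancelWeight_hnnLetter_smul_le_of_cancels φ hc hr hu hsS hsu).trans
      (mul_le_mul_of_nonneg_right (le_max_right _ _) hw)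
  · exact (sum_cancelWeight_hnnLetter_smul_le_of_not_cancels φ hc hr.le (not_exists.1 h)).trans
      (mul_le_mul_of_nonneg_right (le_max_left _ _) hw)

-- To first order in `1 - r` and `c - 1`, the two bounds ask for `N * (c - 1) < 2 * (1 - r)` and
-- `(1 - r) ^ 2 < c - 1`, where `N = s + 2`; hence `c = 1 + (1 - r) / N` with `1 - r = 1 / (N + 2)`.
theorem exists_cancelWeight_parameters {s : ℝ} (hs : 0 ≤ s) : ∃ c r : ℝ, 1 ≤ c ∧ 0 < r ∧
    c * (s + 2 * r) < s + 2 ∧ (s - 1) + c⁻¹ + (r + r⁻¹) < s + 2 := by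
  refine ⟨(s + 3) ^ 2 / ((s + 2) * (s + 4)), (s + 3) / (s + 4), ?_, by positivity, ?_, ?_⟩
  · rw [one_le_div (by positivity)]
    linarith
  · have hgap : s + 2 - (s + 3) ^ 2 / ((s + 2) * (s + 4)) * (s + 2 * ((s + 3) / (s + 4))) =
        ((s + 3) ^ 2 + 1) / ((s + 2) * (s + 4) ^ 2) := by
      field_simp
      ring
    exact sub_pos.1 (hgap ▸ by positivity)
  · have hgap : s + 2 - ((s - 1) + ((s + 3) ^ 2 / ((s + 2) * (s + 4)))⁻¹ +
        ((s + 3) / (s + 4) + ((s + 3) / (s + 4))⁻¹)) = 1 / ((s + 3) ^ 2 * (s + 4)) := by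
      field_simp
      ring
    exact sub_pos.1 (hgap ▸ by positivity)

end NormalWordWeight

section LetterHeight

variable {H : Type*} {S : Finset H}

/-- The exponent sum of `t ^ u` in a letter. -/
def letterHeight (u : ℤˣ) : HNNAlph S → ℤ
  | Sum.inl _ => 0
  | Sum.inr true => u
  | Sum.inr false => -u

theorem abs_letterHeight_le_one (u : ℤˣ) (x : HNNAlph S) : |letterHeight u x| ≤ 1 := by
  rcases x with s | _ | _ <;> rcases Int.units_eq_one_or u with rfl | rfl <;> simp [letterHeight]

theorem letterHeight_sumMap_not (u : ℤˣ) (x : HNNAlph S) :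
    letterHeight u (x.map id not) = -letterHeight u x := by
  rcases x with s | _ | _ <;> simp [letterHeight]

end LetterHeight

section BaseWords

variable {H : Type*} [Group H] {A B : Subgroup H} (φ : A ≃* B) (S : Finset H)

/-- The words over `Δ = Σ ⊔ {b, b⁻¹}` that evaluate into the base group `H`, where `Σ` is `S`. -/
def hnnBaseWords : Set (List (HNNAlph S)) :=
  {l | hnnEval φ l ∈ hnnBase φ}

variable {S}

theorem cancelWeight_hnnEval_smul_ofGroup_one {d : TransversalPair H A B} {c r : ℝ}
    {l : List (HNNAlph S)} (hl : l ∈ hnnBaseWords φ S) :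
    cancelWeight c r (hnnEval φ l • (ofGroup 1 : NormalWord d)) = 1 := by
  obtain ⟨g, hg⟩ := hl
  rw [← hg, of_smul_eq_smul, smul_ofGroup, cancelWeight_ofGroup]

theorem isStronglyNegligible_hnnBaseWords (hgen : Subgroup.closure (S : Set H) = ⊤)
    (hA : A ≠ ⊤) (hB : B ≠ ⊤) : IsStronglyNegligible (hnnBaseWords φ S) := by
  obtain ⟨d⟩ := TransversalPair.nonempty H A B
  obtain ⟨c, r, hc, hr, hK₁, hK₂⟩ := exists_cancelWeight_parameters (s := S.card) (by positivity)
  have hproper (u : ℤˣ) : ∃ s ∈ S, s ∉ toSubgroup A B u := by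
    rcases Int.units_eq_one_or u with rfl | rfl
    exacts [exists_mem_notMem_of_closure_eq_top hgen hA,
      exists_mem_notMem_of_closure_eq_top hgen hB]
  set K : ℝ := max (c * (S.card + 2 * r)) ((S.card - 1) + c⁻¹ + (r + r⁻¹))
  have hK : 0 < K := lt_max_of_lt_left (by positivity)
  have hcount (n : ℕ) : (wordCount (hnnBaseWords φ S) n : ℝ) ≤ K ^ n := by
    simpa only [cancelWeight_ofGroup, mul_one] using wordCount_le_pow_mul
      (cancelWeight_nonneg (zero_le_one.trans hc) hr.le) hK.le
      (sum_cancelWeight_hnnLetter_smul_le φ hc hr hproper)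
      (fun l hl => (cancelWeight_hnnEval_smul_ofGroup_one φ (d := d) hl).ge) n
  exact .of_wordCount_le_pow hK (by simpa [K] using ⟨hK₁, hK₂⟩) hcount

theorem hnnLetter_mul_zpow_neg_letterHeight_mem (u : ℤˣ) (x : HNNAlph S) :
    hnnLetter φ x * (t ^ (u : ℤ)) ^ (-letterHeight u x) ∈ hnnBase φ := by
  rcases x with s | _ | _
  · exact ⟨s, by simp [hnnLetter, letterHeight]⟩
  all_goals
    rcases Int.units_eq_one_or u with rfl | rfl <;> simp [hnnLetter, letterHeight]

theorem zpow_conj_mem_hnnBase {u : ℤˣ} (hu : toSubgroup A B u = ⊤) {g : HNNExtension H A B φ}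
    (hg : g ∈ hnnBase φ) : t ^ (u : ℤ) * g * (t ^ (u : ℤ))⁻¹ ∈ hnnBase φ := by
  obtain ⟨h, rfl⟩ := hg
  have hmem : h ∈ toSubgroup A B u := hu ▸ Subgroup.mem_top h
  rcases Int.units_eq_one_or u with rfl | rfl
  · exact ⟨φ ⟨h, hmem⟩, by simp [equiv_eq_conj]⟩
  · exact ⟨φ.symm ⟨h, hmem⟩, by simp [equiv_symm_eq_conj]⟩

theorem card_pow_le_mul_wordCount_hnnBaseWords {u : ℤˣ} (hu : toSubgroup A B u = ⊤) (n : ℕ) :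
    Fintype.card (HNNAlph S) ^ (n + n) ≤
      (n + n + 1) ^ 3 * wordCount (hnnBaseWords φ S) (n + n) := by
  have hbalanced := card_pow_le_mul_wordCount_sum_eq_zero (abs_letterHeight_le_one (S := S) u)
    (Sum.map_injective.2 ⟨Function.injective_id, Bool.not_injective⟩) (letterHeight_sumMap_not u) n
  have hrotate := wordCount_le_mul_wordCount_of_rotate (L' := hnnBaseWords φ S)
    (exists_rotate_prod_map_mem (fun _ => zpow_conj_mem_hnnBase φ hu)
      (hnnLetter_mul_zpow_neg_letterHeight_mem φ u)) (n + n)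
  calc _ ≤ _ := hbalanced
    _ ≤ (2 * n + 1) ^ 2 * ((n + n + 1) * wordCount (hnnBaseWords φ S) (n + n)) :=
        Nat.mul_le_mul_left _ hrotate
    _ = _ := by ring

theorem not_isStronglyNegligible_hnnBaseWords {u : ℤˣ} (hu : toSubgroup A B u = ⊤) :
    ¬ IsStronglyNegligible (hnnBaseWords φ S) :=
  not_isStronglyNegligible_of_frequently_pow_le 3 <| frequently_atTop.2 fun n =>
    ⟨n + n, le_add_self, card_pow_le_mul_wordCount_hnnBaseWords φ hu n⟩

theorem isStronglyNegligible_hnnBaseWords_iff (hgen : Subgroup.closure (S : Set H) = ⊤) :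
    IsStronglyNegligible (hnnBaseWords φ S) ↔ A ≠ ⊤ ∧ B ≠ ⊤ :=
  ⟨fun h => ⟨fun hA => not_isStronglyNegligible_hnnBaseWords φ ((toSubgroup_one A B).trans hA) h,
    fun hB => not_isStronglyNegligible_hnnBaseWords φ ((toSubgroup_neg_one A B).trans hB) h⟩,
    fun h => isStronglyNegligible_hnnBaseWords φ hgen h.1 h.2⟩

end BaseWords

theorem stmt10_general {H : Type*} [Group H] (S : Finset H)
    (hgen : Subgroup.closure (S : Set H) = ⊤) (A B : Subgroup H) (φ : A ≃* B) :
    (A ≠ ⊤ ∧ B ≠ ⊤) ↔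
      ∃ ε > (0 : ℝ), ∀ᶠ n : ℕ in Filter.atTop,
        (Nat.card {w : Fin n → HNNAlph S // hnnEval φ (List.ofFn w) ∈ hnnBase φ} : ℝ)
          ≤ (2 : ℝ) ^ (-(ε * n)) * (S.card + 2 : ℝ) ^ n := by
  have hcard : (Fintype.card (HNNAlph S) : ℝ) = S.card + 2 := by simp
  rw [← isStronglyNegligible_hnnBaseWords_iff φ hgen, IsStronglyNegligible, hcard]
  rfl

/-- `A ≠ H ≠ B` iff the complement of `H` is strongly generic in `Δ*`. -/
theorem stmt10 {H : Type*} [Group H] (S : Finset H)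
    (hsym : ∀ x ∈ S, x⁻¹ ∈ S) (hgen : Subgroup.closure (S : Set H) = ⊤)
    (A B : Subgroup H) (φ : A ≃* B) :
    (A ≠ ⊤ ∧ B ≠ ⊤) ↔
      ∃ ε > (0 : ℝ), ∀ᶠ n : ℕ in Filter.atTop,
        (Nat.card {w : Fin n → HNNAlph S // hnnEval φ (List.ofFn w) ∈ hnnBase φ} : ℝ)
          ≤ (2 : ℝ) ^ (-(ε * n)) * (S.card + 2 : ℝ) ^ n :=
  stmt10_general S hgen A B φ
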